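/- Let X, Y ∈ G_∞(H) be compatible subspaces such that X ∩ Y has codimension 2 in both X and Y. Then there exists Z ∈ G_∞(H) which is ortho-adjacent to both X and Y. -/

import Mathlib

open Module Submodule Classical

variable {H : Type*} [NormedAddCommGroup H] [InnerProductSpace ℂ H] [CompleteSpace H]

/-- The orthogonal projection of `H` onto a closed subspace `K`, as a map `H →L[ℂ] H`
(defined to be `0` if `K` is not closed). -/
noncomputable def projCLM (K : Submodule ℂ H) : H →L[ℂ] H :=
  if h : IsClosed (K : Set H) then
    haveI : CompleteSpace K := h.completeSpace_coe
    K.subtypeL.comp (orthogonalProjection K)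
  else 0

/-- Two (closed) subspaces are compatible if their orthogonal projections commute. -/
def Compatible (K L : Submodule ℂ H) : Prop := Commute (projCLM K) (projCLM L)

/-- `W` is a subspace of `X` of finite codimension `n` in `X`. -/
def CodimIn (W X : Submodule ℂ H) (n : ℕ) : Prop :=
  W ≤ X ∧ FiniteDimensional ℂ (↥X ⧸ W.comap X.subtype) ∧
    finrank ℂ (↥X ⧸ W.comap X.subtype) = n

/-- `X` and `Y` are adjacent: `X ∩ Y` is a hyperplane in both `X` and `Y`. -/
def Adjacent (X Y : Submodule ℂ H) : Prop :=
  CodimIn (X ⊓ Y) X 1 ∧ CodimIn (X ⊓ Y) Y 1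

/-- `X` and `Y` are ortho-adjacent: adjacent and compatible. -/
def OrthoAdjacent (X Y : Submodule ℂ H) : Prop := Adjacent X Y ∧ Compatible X Y

/-- The Grassmannian `G_∞(H)` of closed subspaces of `H` whose dimension and
codimension both are infinite. -/
def Ginf : Set (Submodule ℂ H) :=
  {X | IsClosed (X : Set H) ∧ ¬FiniteDimensional ℂ X ∧ ¬FiniteDimensional ℂ Xᗮ}

/-- `X ∩ Y` has the same finite codimension in both `X` and `Y`. -/
def SameFinCodim (X Y : Submodule ℂ H) : Prop :=
  ∃ n : ℕ, CodimIn (X ⊓ Y) X n ∧ CodimIn (X ⊓ Y) Y n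

/-- An `A`-component of `G_∞(H)`: a set of elements pairwise at the same finite
codimension, maximal with respect to this property. -/
def IsAComponent (C : Set (Submodule ℂ H)) : Prop :=
  C ⊆ Ginf ∧ (∀ X ∈ C, ∀ Y ∈ C, SameFinCodim X Y) ∧
    ∀ D : Set (Submodule ℂ H), D ⊆ Ginf → (∀ X ∈ D, ∀ Y ∈ D, SameFinCodim X Y) →
      C ⊆ D → D = C

/-- The star `S(X)`: all closed subspaces of `H` containing `X` as a hyperplane. -/
def starSet (X : Submodule ℂ H) : Set (Submodule ℂ H) :=
  {Y | IsClosed (Y : Set H) ∧ CodimIn X Y 1}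

/-- The top `G¹(X)`: all closed hyperplanes of `X`. -/
def topSet (X : Submodule ℂ H) : Set (Submodule ℂ H) :=
  {M | IsClosed (M : Set H) ∧ CodimIn M X 1}

/-- The image `U(M)` of a subspace `M ⊆ X` under a linear isometry `U : X ≃ X'`,
viewed as a subspace of `H`. -/
def imL (X X' : Submodule ℂ H) (U : ↥X ≃ₗᵢ[ℂ] ↥X') (M : Submodule ℂ H) : Submodule ℂ H :=
  Submodule.map X'.subtype (Submodule.map U.toLinearEquiv.toLinearMap (M.comap X.subtype))

/-- The image `U(M)` of a subspace `M ⊆ X` under a conjugate-linear isometry `U : X ≃ X'`,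
viewed as a subspace of `H`. -/
def imC (X X' : Submodule ℂ H) (U : ↥X ≃ₗᵢ⋆[ℂ] ↥X') (M : Submodule ℂ H) : Submodule ℂ H :=
  Submodule.map X'.subtype (Submodule.map U.toLinearEquiv.toLinearMap (M.comap X.subtype))

/-- The Grassmannian `G_k(H)` of `k`-dimensional subspaces of `H`. -/
def Gk (k : ℕ) : Set (Submodule ℂ H) :=
  {X | FiniteDimensional ℂ X ∧ finrank ℂ X = k}

/-- The Grassmannian `G^k(H)` of closed subspaces of `H` of codimension `k`. -/
def GCk (k : ℕ) : Set (Submodule ℂ H) :=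
  {X | IsClosed (X : Set H) ∧ FiniteDimensional ℂ (H ⧸ X) ∧ finrank ℂ (H ⧸ X) = k}


theorem projCLM_eq (K : Submodule ℂ H) (h : IsClosed (K : Set H)) {u v : H} (hv : v ∈ K)
    (huv : u - v ∈ Kᗮ) : projCLM K u = v := by
  have : CompleteSpace K := h.completeSpace_coe
  have h1 : projCLM K u = K.starProjection u := by
    unfold projCLM
    rw [dif_pos h]
    rfl
  rw [h1]
  exact Submodule.eq_starProjection_of_mem_orthogonal hv huv

theorem projCLM_dec (K : Submodule ℂ H) (h : IsClosed (K : Set H)) (u : H) :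
    projCLM K u ∈ K ∧ u - projCLM K u ∈ Kᗮ := by
  have : CompleteSpace K := h.completeSpace_coe
  have h1 : projCLM K u = K.starProjection u := by
    unfold projCLM
    rw [dif_pos h]
    rfl
  rw [h1]
  exact ⟨Submodule.starProjection_apply_mem K u, Submodule.sub_starProjection_mem_orthogonal u⟩

theorem compat_of (Z X : Submodule ℂ H) (hZ : IsClosed (Z : Set H)) (hX : IsClosed (X : Set H))
    (h : ∀ z ∈ Z, projCLM X z ∈ Z) : Compatible Z X := by
  unfold Compatible
  ext u
  change projCLM Z (projCLM X u) = projCLM X (projCLM Z u)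
  obtain ⟨h1, h2⟩ := projCLM_dec Z hZ u
  refine projCLM_eq Z hZ (h _ h1) ?_
  rw [← map_sub]
  rw [Submodule.mem_orthogonal]
  intro z hz
  obtain ⟨h3, h4⟩ := projCLM_dec X hX z
  obtain ⟨h5, h6⟩ := projCLM_dec X hX (u - projCLM Z u)
  have e1 := (Submodule.mem_orthogonal _ _).1 h2 _ (h z hz)
  have e2 := (Submodule.mem_orthogonal _ _).1 h6 _ h3
  have e3 := (Submodule.mem_orthogonal' _ _).1 h4 _ h5
  rw [inner_sub_right] at e2
  rw [inner_sub_left] at e3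
  rw [sub_eq_zero.1 e3, ← sub_eq_zero.1 e2, e1]

theorem codim_step (W X : Submodule ℂ H) (n : ℕ) (h : CodimIn W X (n + 1)) (a : H)
    (ha : a ∈ X) (haW : a ∉ W) : CodimIn (W ⊔ span ℂ {a}) X n := by
  obtain ⟨h1, h2, h3⟩ := h
  have hle : W ⊔ span ℂ {a} ≤ X := sup_le h1 (by simpa [span_le] using ha)
  have hc : (W ⊔ span ℂ {a}).comap X.subtype = W.comap X.subtype ⊔ span ℂ {(⟨a, ha⟩ : X)} := by
    ext ⟨x, hx⟩
    simp only [mem_comap, subtype_apply, mem_sup, mem_span_singleton]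
    constructor
    · rintro ⟨y, hy, _, ⟨c, rfl⟩, rfl⟩
      exact ⟨⟨y, h1 hy⟩, hy, _, ⟨c, rfl⟩, rfl⟩
    · rintro ⟨y, hy, _, ⟨c, rfl⟩, e⟩
      exact ⟨y, hy, _, ⟨c, rfl⟩, congrArg Subtype.val e⟩
  set S := W.comap X.subtype with hS
  have e := quotientQuotientEquivQuotient S (S ⊔ span ℂ {(⟨a, ha⟩ : X)}) le_sup_left
  have hm : (S ⊔ span ℂ {(⟨a, ha⟩ : X)}).map S.mkQ = span ℂ {S.mkQ ⟨a, ha⟩} := by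
    rw [Submodule.map_sup, Submodule.map_span]
    simp [Submodule.mkQ_map_self]
  have hne : S.mkQ ⟨a, ha⟩ ≠ 0 := by
    simpa [hS] using haW
  have hf := Submodule.finrank_quotient_add_finrank ((S ⊔ span ℂ {(⟨a, ha⟩ : X)}).map S.mkQ)
  rw [e.finrank_eq, hm, finrank_span_singleton hne, h3] at hf
  refine ⟨hle, ?_, ?_⟩
  · rw [hc]
    exact Module.Finite.equiv e
  · rw [hc]; omega

theorem codim_one (V : Submodule ℂ H) (c : H) (hc : c ∉ V) : CodimIn V (V ⊔ span ℂ {c}) 1 := by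
  have hcm : c ∈ V ⊔ span ℂ {c} := (le_sup_right : _ ≤ V ⊔ span ℂ {c}) (mem_span_singleton_self c)
  have hf : finrank ℂ (↥(V ⊔ span ℂ {c}) ⧸ V.comap (V ⊔ span ℂ {c}).subtype) = 1 := by
    refine finrank_eq_one (Submodule.Quotient.mk ⟨c, hcm⟩) ?_ ?_
    · simpa using hc
    · intro w
      obtain ⟨⟨x, hx⟩, rfl⟩ := Submodule.Quotient.mk_surjective _ w
      obtain ⟨y, hy, _, hz, rfl⟩ := mem_sup.1 hx
      obtain ⟨k, rfl⟩ := mem_span_singleton.1 hz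
      refine ⟨k, ?_⟩
      rw [← Submodule.Quotient.mk_smul, Submodule.Quotient.eq]
      simpa using hy
  exact ⟨le_sup_left, Module.finite_of_finrank_pos (by omega), hf⟩

theorem half (W X : Submodule ℂ H) (hX : IsClosed (X : Set H)) (h : CodimIn W X 2)
    (a b : H) (ha : a ∈ X) (haW : a ∉ W) (hb : b ∈ Xᗮ) (hb0 : b ≠ 0)
    (hZ : IsClosed ((W ⊔ span ℂ {a} ⊔ span ℂ {b} : Submodule ℂ H) : Set H)) :
    OrthoAdjacent (W ⊔ span ℂ {a} ⊔ span ℂ {b}) X := by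
  have hs := codim_step W X 1 h a ha haW
  have hV := hs.1
  have key : ∀ z ∈ W ⊔ span ℂ {a} ⊔ span ℂ {b}, projCLM X z ∈ W ⊔ span ℂ {a} := by
    intro z hz
    obtain ⟨y, hy, t, ht, rfl⟩ := mem_sup.1 hz
    obtain ⟨k, rfl⟩ := mem_span_singleton.1 ht
    have hk : (y + k • b) - y ∈ Xᗮ := by
      rw [add_sub_cancel_left]
      exact Submodule.smul_mem _ k hb
    have hp : projCLM X (y + k • b) = y := projCLM_eq X hX (hV hy) hk
    rw [hp]
    exact hy
  have hbV : b ∉ W ⊔ span ℂ {a} := by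
    intro hb'
    exact hb0 (inner_self_eq_zero.1 ((Submodule.mem_orthogonal _ _).1 hb b (hV hb')))
  have hI : (W ⊔ span ℂ {a} ⊔ span ℂ {b}) ⊓ X = W ⊔ span ℂ {a} := by
    apply le_antisymm
    · rintro z ⟨hz, hzX⟩
      have := key z hz
      rwa [projCLM_eq X hX hzX (by simp)] at this
    · exact le_inf le_sup_left hV
  refine ⟨⟨?_, ?_⟩, compat_of _ _ hZ hX fun z hz => (le_sup_left : _ ≤ _ ⊔ span ℂ {b}) (key z hz)⟩
  · rw [hI]; exact codim_one _ _ hbV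
  · rw [hI]; exact hs

theorem exists_vec (X Y : Submodule ℂ H) (hX : IsClosed (X : Set H)) (hY : IsClosed (Y : Set H))
    (hcomp : Compatible X Y) (h : CodimIn (X ⊓ Y) X 2) :
    ∃ a ∈ X, a ∉ X ⊓ Y ∧ a ∈ Yᗮ ∧ a ≠ 0 := by
  have hne : ∃ x ∈ X, x ∉ Y := by
    by_contra! hcon
    have : (X ⊓ Y).comap X.subtype = ⊤ := by
      ext ⟨x, hx⟩
      simpa [hx] using hcon x hx
    obtain ⟨-, -, h3⟩ := h
    rw [this] at h3
    have := Module.finrank_zero_of_subsingleton (R := ℂ) (M := ↥X ⧸ (⊤ : Submodule ℂ X))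
    omega
  obtain ⟨x, hx, hxY⟩ := hne
  obtain ⟨h1, h2⟩ := projCLM_dec Y hY x
  have hP : projCLM X x = x := projCLM_eq X hX hx (by simp)
  have hc : projCLM X (projCLM Y x) = projCLM Y (projCLM X x) :=
    congrArg (fun f : H →L[ℂ] H => f x) hcomp
  rw [hP] at hc
  have hQX : projCLM Y x ∈ X := hc ▸ (projCLM_dec X hX (projCLM Y x)).1
  refine ⟨x - projCLM Y x, X.sub_mem hx hQX, ?_, h2, ?_⟩
  · intro h'
    exact hxY (by simpa using Y.add_mem h'.2 h1)
  · intro h'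
    rw [sub_eq_zero] at h'
    exact hxY (h' ▸ h1)

/-- if `X, Y ∈ G_∞(H)` are compatible and `X ∩ Y` has codimension 2 in both,
then there is `Z ∈ G_∞(H)` ortho-adjacent to both `X` and `Y`. -/
theorem stmt2 (hH : ¬FiniteDimensional ℂ H) (X Y : Submodule ℂ H)
    (hX : X ∈ Ginf (H := H)) (hY : Y ∈ Ginf (H := H))
    (hcomp : Compatible X Y)
    (h2X : CodimIn (X ⊓ Y) X 2) (h2Y : CodimIn (X ⊓ Y) Y 2) :
    ∃ Z ∈ Ginf (H := H), OrthoAdjacent Z X ∧ OrthoAdjacent Z Y := by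
  obtain ⟨cX, iX, iX'⟩ := hX
  obtain ⟨cY, -, -⟩ := hY
  obtain ⟨a, haX, haW, haY, ha0⟩ := exists_vec X Y cX cY hcomp h2X
  obtain ⟨b, hbY, hbW, hbX, hb0⟩ := exists_vec Y X cY cX hcomp.symm (by rwa [inf_comm])
  rw [inf_comm] at hbW
  have cW : IsClosed ((X ⊓ Y : Submodule ℂ H) : Set H) := cX.inter cY
  have cZ : IsClosed ((X ⊓ Y ⊔ span ℂ {a} ⊔ span ℂ {b} : Submodule ℂ H) : Set H) :=
    Submodule.isClosed_sup_finiteDimensional _ _ (Submodule.isClosed_sup_finiteDimensional _ _ cW)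
  have hsw : X ⊓ Y ⊔ span ℂ {a} ⊔ span ℂ {b} = X ⊓ Y ⊔ span ℂ {b} ⊔ span ℂ {a} :=
    sup_right_comm _ _ _
  refine ⟨X ⊓ Y ⊔ span ℂ {a} ⊔ span ℂ {b}, ⟨cZ, ?_, ?_⟩,
    half _ X cX h2X a b haX haW hbX hb0 cZ, ?_⟩
  · intro hfd
    apply iX
    have hW : FiniteDimensional ℂ (X ⊓ Y : Submodule ℂ H) :=
      Submodule.finiteDimensional_of_le (le_sup_left.trans le_sup_left :
        X ⊓ Y ≤ X ⊓ Y ⊔ span ℂ {a} ⊔ span ℂ {b})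
    have := h2X.2.1
    have : FiniteDimensional ℂ ((X ⊓ Y).comap X.subtype) :=
      Module.Finite.equiv (Submodule.comapSubtypeEquivOfLe h2X.1).symm
    exact Module.Finite.of_submodule_quotient ((X ⊓ Y).comap X.subtype)
  · intro hfd
    apply iX'
    have hle : Xᗮ ⊓ LinearMap.ker (innerSL ℂ b : H →ₗ[ℂ] ℂ) ≤
        (X ⊓ Y ⊔ span ℂ {a} ⊔ span ℂ {b})ᗮ := by
      rintro v ⟨hv, hvb⟩
      have hvb' : inner ℂ b v = 0 := hvb
      rw [← Submodule.inf_orthogonal]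
      refine ⟨Submodule.orthogonal_le (sup_le h2X.1 (by simpa [span_le] using haX)) hv, ?_⟩
      exact Submodule.mem_orthogonal_singleton_iff_inner_right.2 hvb'
    have h1 := Submodule.finiteDimensional_of_le hle
    replace h1 := Module.Finite.iff_fg.1 h1
    refine Module.Finite.iff_fg.2 ?_
    exact Submodule.fg_of_fg_map_of_fg_inf_ker (innerSL ℂ b : H →ₗ[ℂ] ℂ)
      (IsNoetherian.noetherian _) h1
  · rw [hsw] at cZ ⊢
    exact half _ Y cY h2Y b a hbY hbW haY ha0 cZ
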